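/- The set of 3×3 real orthogonal matrices A such that A maps the eight-point set {T'_1,T'_2,T'_3,T'_4,T_5,T_6,T_7,T_8} onto itself and maps the ten-point set {S_1,S_2,S_3,S_4,S_5,S_6,S_2',S_3',S_4',S_5'} onto itself is exactly the group G' generated by σ'_2 and σ', and this set has exactly 16 elements. (Thus the symmetry group of the pseudo-deltoidal icositetrahedron has order 16.) -/

import Mathlib

open Matrix

/-- `τ = (2√2+1)/7`. -/
noncomputable def tau : ℝ := (2 * Real.sqrt 2 + 1) / 7

/-- The eight points `T'_1, T'_2, T'_3, T'_4, T_5, T_6, T_7, T_8` of the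
pseudo-deltoidal icositetrahedron (indexed by `Fin 8`). -/
noncomputable def P8 : Fin 8 → Fin 3 → ℝ :=
  ![tau • ![Real.sqrt 2, 0, 1], tau • ![0, Real.sqrt 2, 1],
    tau • ![-Real.sqrt 2, 0, 1], tau • ![0, -Real.sqrt 2, 1],
    tau • ![1, 1, -1], tau • ![-1, 1, -1], tau • ![-1, -1, -1], tau • ![1, -1, -1]]

/-- The ten points `S_1, …, S_6, S_2', S_3', S_4', S_5'` (indexed by `Fin 10`). -/
noncomputable def P10 : Fin 10 → Fin 3 → ℝ :=
  ![![0, 0, 1], ![1, 0, 0], ![0, 1, 0], ![-1, 0, 0], ![0, -1, 0], ![0, 0, -1],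
    (1 / Real.sqrt 2) • ![1, -1, 0], (1 / Real.sqrt 2) • ![1, 1, 0],
    (1 / Real.sqrt 2) • ![-1, 1, 0], (1 / Real.sqrt 2) • ![-1, -1, 0]]

/-- The matrix `σ'₂` with rows `(1/√2, 1/√2, 0), (−1/√2, 1/√2, 0), (0, 0, −1)`. -/
noncomputable def sigma2' : Matrix (Fin 3) (Fin 3) ℝ :=
  !![1 / Real.sqrt 2, 1 / Real.sqrt 2, 0;
     -(1 / Real.sqrt 2), 1 / Real.sqrt 2, 0;
     0, 0, -1]

/-- The matrix `σ' = diag(1, −1, 1)`. -/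
def sigma' : Matrix (Fin 3) (Fin 3) ℝ := !![1, 0, 0; 0, -1, 0; 0, 0, 1]

/-- `G'`: the subgroup of `GL(3,ℝ)` generated by `σ'₂` and `σ'`. -/
noncomputable def G' : Subgroup (GL (Fin 3) ℝ) :=
  Subgroup.closure {g | (↑g : Matrix (Fin 3) (Fin 3) ℝ) = sigma2' ∨
    (↑g : Matrix (Fin 3) (Fin 3) ℝ) = sigma'}

/-- The orthogonal matrices mapping each of the two point sets onto itself. -/
noncomputable def symSet : Set (Matrix (Fin 3) (Fin 3) ℝ) :=
  {A | Aᵀ * A = 1 ∧ A.mulVec '' Set.range P8 = Set.range P8 ∧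
    A.mulVec '' Set.range P10 = Set.range P10}
/-! Orbit–stabilizer, applied to the symmetry group acting on `S_2 = (1,0,0)`.

A symmetry cannot send `S_2` to a pole `±(0,0,1)`: `S_2` is orthogonal to `T'_2`, whereas no point
of the eight-point set is orthogonal to a pole. So the orbit of `S_2` lies among the eight
equatorial points of the ten-point set, which `σ'₂` permutes cyclically. A symmetry fixing `S_2`
preserves first coordinates, hence fixes `T'_1`, the only one of the eight points with its first
coordinate, hence fixes `(0,0,1)`. An orthogonal matrix fixing the first and third basis vectors is
`1` or `σ'`. Therefore `σ'₂` and `σ'` generate the symmetry group, and its order is `8 * 2`.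
-/

open MulAction
open scoped Pointwise

section TwoGenerators

variable {G X : Type*} [Group G] [MulAction G X] {H : Subgroup G} {ρ σ : G} {x : X}

lemma eq_closure_pair_of_orbit_subset (hρ : ρ ∈ H)
    (horbit : orbit H x ⊆ orbit (Subgroup.zpowers ρ) x)
    (hstab : stabilizer G x ⊓ H = Subgroup.zpowers σ) :
    H = Subgroup.closure {ρ, σ} := by
  have hσ : σ ∈ H := (hstab.ge (Subgroup.mem_zpowers σ)).2
  refine le_antisymm (fun g hg ↦ ?_) ?_
  · obtain ⟨⟨r, hr⟩, hrx : r • x = g • x⟩ := horbit ⟨⟨g, hg⟩, rfl⟩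
    have hrH : r ∈ H := (Subgroup.zpowers_le.mpr hρ) hr
    have hfix : r⁻¹ * g ∈ Subgroup.zpowers σ := by
      rw [← hstab, Subgroup.mem_inf, mem_stabilizer_iff, mul_smul, ← hrx, inv_smul_smul]
      exact ⟨rfl, H.mul_mem (H.inv_mem hrH) hg⟩
    have zpowers_le {τ : G} (hτ : τ ∈ ({ρ, σ} : Set G)) :
        Subgroup.zpowers τ ≤ Subgroup.closure {ρ, σ} :=
      Subgroup.zpowers_le.mpr (Subgroup.subset_closure hτ)
    rw [← mul_inv_cancel_left r g]
    exact mul_mem (zpowers_le (by simp) hr) (zpowers_le (by simp) hfix)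
  · simp [Subgroup.closure_le, Set.insert_subset_iff, hρ, hσ]

lemma card_eq_period_mul_orderOf (hρ : ρ ∈ H)
    (horbit : orbit H x ⊆ orbit (Subgroup.zpowers ρ) x)
    (hstab : stabilizer G x ⊓ H = Subgroup.zpowers σ) :
    Nat.card H = period ρ x * orderOf σ := by
  have horbit_eq : orbit H x = orbit (Subgroup.zpowers ρ) x := by
    refine horbit.antisymm ?_
    rintro _ ⟨⟨r, hr⟩, rfl⟩
    exact ⟨⟨r, Subgroup.zpowers_le.mpr hρ hr⟩, rfl⟩
  have hstab_eq : stabilizer H x = (stabilizer G x ⊓ H).subgroupOf H := by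
    ext h; simp [Subgroup.mem_subgroupOf, Subgroup.smul_def]
  have card_stab : Nat.card (stabilizer H x) = orderOf σ := by
    rw [hstab_eq, Nat.card_congr (Subgroup.subgroupOfEquivOfLe inf_le_right).toEquiv, hstab,
      Nat.card_zpowers]
  rw [← Nat.card_congr (orbitProdStabilizerEquivGroup H x), Nat.card_prod, card_stab, horbit_eq,
    Nat.card_congr (orbitZPowersEquiv ρ x), Nat.card_zmod, period_eq_minimalPeriod]

end TwoGenerators

section IndexedPoints

variable {M X ι : Type*} [Monoid M] [MulAction M X] {g : M} {P : ι → X} {f : ι → ι}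

lemma smul_range_eq_of_semiconj (hf : f.Surjective) (h : Function.Semiconj P f (g • ·)) :
    g • Set.range P = Set.range P := by
  rw [Set.smul_set_range, ← hf.range_comp P]
  exact congrArg Set.range h.comp_eq.symm

lemma pow_smul_eq_iterate_of_semiconj (h : Function.Semiconj P f (g • ·)) (k : ℕ) (i : ι) :
    g ^ k • P i = P (f^[k] i) := by
  rw [← smul_iterate_apply]
  exact ((h.iterate_right k).eq i).symm

end IndexedPoints

section Orthogonal

variable {n R : Type*} [Fintype n] [DecidableEq n] [CommRing R]

lemma mem_units_orthogonalGroup_iff {g : GL n R} :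
    g ∈ (orthogonalGroup n R).units ↔ (g : Matrix n n R)ᵀ * g = 1 := by
  rw [Submonoid.mem_units_iff, mem_orthogonalGroup_iff', mem_orthogonalGroup_iff',
    and_iff_left_iff_imp]
  intro h
  have hinv : (↑g⁻¹ : Matrix n n R) = (g : Matrix n n R)ᵀ := Units.inv_eq_of_mul_eq_one_left h
  rw [hinv, transpose_transpose]
  exact mul_eq_one_comm.mp h

lemma mulVec_dotProduct_mulVec_of_mem_orthogonalGroup {A : Matrix n n R}
    (hA : A ∈ orthogonalGroup n R) (v w : n → R) : (A *ᵥ v) ⬝ᵥ (A *ᵥ w) = v ⬝ᵥ w := by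
  rw [dotProduct_mulVec, ← mulVec_transpose, mulVec_mulVec, (mem_orthogonalGroup_iff' n R).mp hA,
    one_mulVec]

lemma eq_one_or_eq_diagonal_update_neg_one [NoZeroDivisors R] {A : Matrix n n R}
    (hA : A ∈ orthogonalGroup n R) {i : n}
    (hfix : ∀ j ≠ i, A *ᵥ Pi.single j 1 = Pi.single j 1) :
    A = 1 ∨ A = diagonal (Function.update 1 i (-1)) := by
  have hAA : Aᵀ * A = 1 := (mem_orthogonalGroup_iff' n R).mp hA
  have hfixT : ∀ j ≠ i, Aᵀ *ᵥ Pi.single j 1 = Pi.single j 1 := fun j hj ↦ by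
    rw [← congrArg (Aᵀ *ᵥ ·) (hfix j hj), mulVec_mulVec, hAA, one_mulVec]
  have hdiag : A = diagonal (Function.update 1 i (A i i)) := by
    ext k l
    by_cases hl : l = i
    · by_cases hk : k = i
      · simp [hk, hl]
      · simpa [diagonal_apply, hk, Pi.single_apply, eq_comm] using congrFun (hfixT k hk) l
    · have hkl : A k l = if k = l then 1 else 0 := by
        simpa [Pi.single_apply] using congrFun (hfix l hl) k
      rcases eq_or_ne k l with rfl | hne
      · simp [hkl, hl]
      · simp [hkl, hne]
  have hsq : A i i * A i i = 1 := by
    rw [hdiag, diagonal_transpose, diagonal_mul_diagonal] at hAA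
    simpa using congrFun₂ hAA i i
  rw [hdiag]
  rcases mul_self_eq_one_iff.mp hsq with h | h
  · left; simp [h]
  · right; simp [h]

end Orthogonal

/-- The symmetry group of the pseudo-deltoidal icositetrahedron, i.e. the orthogonal matrices that
stabilize both point sets. It is the set `symSet`, bundled as a subgroup of `GL(3,ℝ)` so that it
acts on vectors. -/
noncomputable def symGroup : Subgroup (GL (Fin 3) ℝ) :=
  (orthogonalGroup (Fin 3) ℝ).units ⊓
    (stabilizer (GL (Fin 3) ℝ) (Set.range P8) ⊓ stabilizer (GL (Fin 3) ℝ) (Set.range P10))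

lemma coe_mem_symSet_iff {g : GL (Fin 3) ℝ} :
    (g : Matrix (Fin 3) (Fin 3) ℝ) ∈ symSet ↔ g ∈ symGroup :=
  and_congr_left' mem_units_orthogonalGroup_iff.symm

lemma symSet_eq_image_symGroup :
    symSet = (fun g : GL (Fin 3) ℝ ↦ (g : Matrix (Fin 3) (Fin 3) ℝ)) '' symGroup := by
  ext A
  constructor
  · intro hA
    exact ⟨⟨A, Aᵀ, mul_eq_one_comm.mp hA.1, hA.1⟩, coe_mem_symSet_iff.mp hA, rfl⟩
  · rintro ⟨g, hg, rfl⟩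
    exact coe_mem_symSet_iff.mpr hg

lemma sigma2'_mulVec (x y z : ℝ) : sigma2' *ᵥ ![x, y, z] = ![(x + y) / √2, (y - x) / √2, -z] := by
  ext j
  fin_cases j <;> simp [sigma2'] <;> ring

lemma sigma'_mulVec (x y z : ℝ) : sigma' *ᵥ ![x, y, z] = ![x, -y, z] := by
  ext j
  fin_cases j <;> simp [sigma']

lemma sigma'_eq_diagonal : sigma' = diagonal (Function.update 1 1 (-1)) := by
  ext j k
  fin_cases j <;> fin_cases k <;> simp [sigma']

lemma sigma2'_transpose_mul_self : sigma2'ᵀ * sigma2' = 1 := by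
  have h : (√2)⁻¹ * (√2)⁻¹ = (1 / 2 : ℝ) := by rw [← mul_inv, Real.mul_self_sqrt] <;> norm_num
  ext j k
  fin_cases j <;> fin_cases k <;>
    simp [sigma2', mul_apply, Fin.sum_univ_three, h] <;> norm_num

lemma sigma'_transpose_mul_self : sigma'ᵀ * sigma' = 1 := by
  ext j k
  fin_cases j <;> fin_cases k <;> simp [sigma', mul_apply, Fin.sum_univ_three]

/-- `σ'₂`, a rotation by an eighth of a turn about the vertical axis followed by the reflection in
the equatorial plane, as an element of `GL(3,ℝ)`. -/
noncomputable def rotoreflection : GL (Fin 3) ℝ :=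
  ⟨sigma2', sigma2'ᵀ, mul_eq_one_comm.mp sigma2'_transpose_mul_self, sigma2'_transpose_mul_self⟩

/-- `σ'`, the reflection negating the second coordinate, as an element of `GL(3,ℝ)`. -/
def mirror : GL (Fin 3) ℝ :=
  ⟨sigma', sigma'ᵀ, mul_eq_one_comm.mp sigma'_transpose_mul_self, sigma'_transpose_mul_self⟩

lemma G'_eq_closure_pair : G' = Subgroup.closure {rotoreflection, mirror} := by
  unfold G'
  congr 1
  ext g
  simp [Units.ext_iff, rotoreflection, mirror]

lemma add_self_div_sqrt_two (x : ℝ) : (x + x) / √2 = x * √2 := by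
  rw [← two_mul, mul_comm, mul_div_assoc, Real.div_sqrt]

lemma semiconj_P8_rotoreflection :
    Function.Semiconj P8 ![7, 4, 5, 6, 0, 1, 2, 3] (rotoreflection • ·) := by
  intro i
  change _ = sigma2' *ᵥ P8 i
  fin_cases i <;> simp [P8, sigma2'_mulVec, sub_eq_add_neg, neg_div, add_self_div_sqrt_two]

/-- The action of `σ'₂` on the indices of the ten points `P10`. It swaps the poles
`0` and `5`, and moves the equatorial points along the cycle `1, 6, 4, 9, 3, 8, 2, 7`. -/
def rotoreflectionIndexMap : Fin 10 → Fin 10 := ![5, 6, 7, 8, 9, 0, 4, 1, 2, 3]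

lemma semiconj_P10_rotoreflection :
    Function.Semiconj P10 rotoreflectionIndexMap (rotoreflection • ·) := by
  intro i
  change _ = sigma2' *ᵥ P10 i
  fin_cases i <;>
    simp [P10, rotoreflectionIndexMap, sigma2'_mulVec, sub_eq_add_neg, neg_div,
      add_self_div_sqrt_two]

lemma semiconj_P8_mirror : Function.Semiconj P8 ![0, 3, 2, 1, 7, 6, 5, 4] (mirror • ·) := by
  intro i
  change _ = sigma' *ᵥ P8 i
  fin_cases i <;> simp [P8, sigma'_mulVec]

lemma semiconj_P10_mirror : Function.Semiconj P10 ![0, 1, 4, 3, 2, 5, 7, 6, 9, 8] (mirror • ·) := by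
  intro i
  change _ = sigma' *ᵥ P10 i
  fin_cases i <;> simp [P10, sigma'_mulVec]

lemma rotoreflection_mem_symGroup : rotoreflection ∈ symGroup :=
  ⟨mem_units_orthogonalGroup_iff.mpr sigma2'_transpose_mul_self,
    smul_range_eq_of_semiconj (by decide) semiconj_P8_rotoreflection,
    smul_range_eq_of_semiconj (by decide) semiconj_P10_rotoreflection⟩

lemma mirror_mem_symGroup : mirror ∈ symGroup :=
  ⟨mem_units_orthogonalGroup_iff.mpr sigma'_transpose_mul_self,
    smul_range_eq_of_semiconj (by decide) semiconj_P8_mirror,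
    smul_range_eq_of_semiconj (by decide) semiconj_P10_mirror⟩

lemma smul_dotProduct_smul_of_mem_symGroup {g : GL (Fin 3) ℝ} (hg : g ∈ symGroup)
    (v w : Fin 3 → ℝ) : (g • v) ⬝ᵥ (g • w) = v ⬝ᵥ w :=
  mulVec_dotProduct_mulVec_of_mem_orthogonalGroup hg.1.1 v w

lemma exists_smul_P8_eq {g : GL (Fin 3) ℝ} (hg : g ∈ symGroup) (i : Fin 8) :
    ∃ j, P8 j = g • P8 i :=
  hg.2.1.le (Set.smul_mem_smul_set (Set.mem_range_self i))

lemma exists_smul_P10_eq {g : GL (Fin 3) ℝ} (hg : g ∈ symGroup) (i : Fin 10) :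
    ∃ j, P10 j = g • P10 i :=
  hg.2.2.le (Set.smul_mem_smul_set (Set.mem_range_self i))

lemma tau_pos : 0 < tau := by
  unfold tau
  positivity

lemma P8_apply_two_ne_zero (i : Fin 8) : P8 i 2 ≠ 0 := by
  fin_cases i <;> simp [P8, tau_pos.ne']

lemma eq_zero_of_P8_apply_zero_eq {i : Fin 8} (h : P8 i 0 = P8 0 0) : i = 0 := by
  have ht := tau_pos
  have hs : tau < tau * √2 := lt_mul_of_one_lt_right ht Real.one_lt_sqrt_two
  fin_cases i <;> simp [P8] at h ⊢ <;> linarith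

lemma orbit_symGroup_subset :
    orbit symGroup (P10 1) ⊆ orbit (Subgroup.zpowers rotoreflection) (P10 1) := by
  rintro _ ⟨⟨g, hg⟩, rfl⟩
  obtain ⟨j, hj⟩ := exists_smul_P10_eq hg 1
  obtain ⟨i, hi⟩ := exists_smul_P8_eq hg 1
  have hperp : P8 i ⬝ᵥ P10 j = 0 := by
    rw [hi, hj, smul_dotProduct_smul_of_mem_symGroup hg]
    simp [P8, P10]
  have hj_pole : j ≠ 0 ∧ j ≠ 5 := by
    have hi_two := P8_apply_two_ne_zero i
    constructor <;> rintro rfl <;> simp [P10, dotProduct, Fin.sum_univ_three, hi_two] at hperp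
  obtain ⟨k, hk⟩ : ∃ k : Fin 8, rotoreflectionIndexMap^[k] 1 = j :=
    (by decide : ∀ j, j ≠ 0 ∧ j ≠ 5 → ∃ k : Fin 8, rotoreflectionIndexMap^[k] 1 = j) j hj_pole
  refine ⟨⟨rotoreflection ^ (k : ℕ), Subgroup.npow_mem_zpowers _ _⟩, ?_⟩
  change rotoreflection ^ (k : ℕ) • P10 1 = g • P10 1
  rw [pow_smul_eq_iterate_of_semiconj semiconj_P10_rotoreflection, hk, hj]

lemma period_rotoreflection : period rotoreflection (P10 1) = 8 := by
  have hpow_four : rotoreflection ^ 2 ^ 2 • P10 1 = P10 3 :=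
    pow_smul_eq_iterate_of_semiconj semiconj_P10_rotoreflection _ _
  have hpow_eight : rotoreflection ^ 2 ^ 3 • P10 1 = P10 1 :=
    pow_smul_eq_iterate_of_semiconj semiconj_P10_rotoreflection _ _
  have hne : P10 3 ≠ P10 1 := fun h ↦ by
    have h0 : (-1 : ℝ) = 1 := congrFun h 0
    norm_num at h0
  refine Function.minimalPeriod_eq_prime_pow (p := 2) (k := 2) ?_ ?_
  · rwa [isPeriodicPt_smul_iff, hpow_four]
  · exact isPeriodicPt_smul_iff.mpr hpow_eight

lemma orderOf_mirror : orderOf mirror = 2 := by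
  refine orderOf_eq_prime ?_ ?_
  · ext1
    have hT : sigma'ᵀ = sigma' := by simp [sigma'_eq_diagonal]
    change sigma' ^ 2 = 1
    rw [sq, ← sigma'_transpose_mul_self, hT]
  · intro h
    have h11 : (-1 : ℝ) = 1 := congrArg (fun g : GL (Fin 3) ℝ ↦ g.val 1 1) h
    norm_num at h11

lemma P10_zero : P10 0 = Pi.single 2 1 := by
  ext j
  fin_cases j <;> simp [P10]

lemma P10_one : P10 1 = Pi.single 0 1 := by
  ext j
  fin_cases j <;> simp [P10]

lemma P8_zero : P8 0 = (tau * √2) • P10 1 + tau • P10 0 := by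
  simp [P8, P10]

lemma smul_P10_zero_eq_of_smul_P10_one_eq {g : GL (Fin 3) ℝ} (hg : g ∈ symGroup)
    (hfix : g • P10 1 = P10 1) : g • P10 0 = P10 0 := by
  obtain ⟨j, hj⟩ := exists_smul_P8_eq hg 0
  have hj_zero : j = 0 := by
    refine eq_zero_of_P8_apply_zero_eq ?_
    have hdot := smul_dotProduct_smul_of_mem_symGroup hg (P8 0) (P10 1)
    rw [← hj, hfix, P10_one] at hdot
    simpa using hdot
  have hP8 : g • P8 0 = P8 0 := by rw [← hj, hj_zero]
  change g.val *ᵥ P10 1 = P10 1 at hfix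
  change g.val *ᵥ P8 0 = P8 0 at hP8
  rw [P8_zero, mulVec_add, mulVec_smul, mulVec_smul, hfix, add_right_inj] at hP8
  exact smul_right_injective _ tau_pos.ne' hP8

lemma stabilizer_inf_symGroup :
    stabilizer (GL (Fin 3) ℝ) (P10 1) ⊓ symGroup = Subgroup.zpowers mirror := by
  refine le_antisymm ?_ ?_
  · rintro g ⟨hfix : g • P10 1 = P10 1, hg⟩
    have hpole : g • P10 0 = P10 0 := smul_P10_zero_eq_of_smul_P10_one_eq hg hfix
    have hcases : (g : Matrix (Fin 3) (Fin 3) ℝ) = 1 ∨ (g : Matrix (Fin 3) (Fin 3) ℝ) = sigma' := by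
      rw [sigma'_eq_diagonal]
      refine eq_one_or_eq_diagonal_update_neg_one hg.1.1 fun j hj ↦ ?_
      obtain rfl | rfl : j = 0 ∨ j = 2 := by omega
      · rwa [P10_one] at hfix
      · rwa [P10_zero] at hpole
    rcases hcases with h | h
    · rw [Units.val_eq_one.mp h]
      exact one_mem _
    · rw [show g = mirror from Units.ext h]
      exact Subgroup.mem_zpowers _
  · rw [Subgroup.zpowers_le]
    exact ⟨(semiconj_P10_mirror 1).symm, mirror_mem_symGroup⟩

/-- The set of `3×3` real orthogonal matrices mapping `{T'_1,…,T'_4,T_5,…,T_8}` onto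
itself and `{S_1,…,S_6,S_2',…,S_5'}` onto itself is exactly the group `G'` generated
by `σ'₂` and `σ'`, and it has exactly `16` elements. -/
theorem stmt_9 :
    symSet = (fun g : GL (Fin 3) ℝ => (↑g : Matrix (Fin 3) (Fin 3) ℝ)) ''
      (G' : Set (GL (Fin 3) ℝ)) ∧
    Nat.card symSet = 16 := by
  constructor
  · rw [symSet_eq_image_symGroup, G'_eq_closure_pair,
      ← eq_closure_pair_of_orbit_subset rotoreflection_mem_symGroup orbit_symGroup_subset
        stabilizer_inf_symGroup]
  · rw [symSet_eq_image_symGroup, Nat.card_image_of_injective Units.val_injective]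
    change Nat.card symGroup = 16
    rw [card_eq_period_mul_orderOf rotoreflection_mem_symGroup orbit_symGroup_subset
        stabilizer_inf_symGroup, period_rotoreflection, orderOf_mirror]
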